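/- arXiv:2207.10590 — 2 statements merged into one kernel-verified Lean document; each statement's English description precedes it below -/
import Mathlib

section
/- Let X be a standard Borel space and R an equivalence relation on X whose graph is a Borel subset of X × X. Then for probability measures μ, ν on X, μ ΓR ν holds if and only if μ ΘR ν holds, i.e., the two relation liftings Γ (agreement on R-closed measurable sets) and Θ (existence of a coupling concentrated on R) coincide for Borel equivalence relations. -/
open MeasureTheory

/-- A set `A` is `r`-closed when it is closed under the relation `r`. -/
def RClosed {X : Type*} (r : X → X → Prop) (A : Set X) : Prop :=
  ∀ ⦃x⦄, x ∈ A → ∀ ⦃y⦄, r x y → y ∈ A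

/-- The probabilistic relation lifting `Γ`. -/
def GammaRel {X : Type*} [MeasurableSpace X] (r : X → X → Prop) (μ ν : Measure X) : Prop :=
  ∀ A : Set X, MeasurableSet A → RClosed r A → μ A = ν A

/-!
A measure carried by `R` has marginals which agree on `R`-closed sets. Conversely, let `ω` be
maximal among the measures carried by `R` whose marginals are dominated by `μ` and `ν`, and let
`μ'`, `ν'` be what `ω` leaves of `μ` and `ν`. If `R` could not be covered by strips `A × X` and
`X × C` of arbitrarily small total measure `μ' A + ν' C`, then neither could some compact subset of
`R`, since this cost is a Choquet capacity; on a compact set, linear programming duality (the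
M. Riesz extension theorem) and the Riesz-Markov theorem produce a nonzero measure with marginals
dominated by `μ'` and `ν'`, contradicting maximality. Hence `R` is covered by such strips with
`μ' A = ν' C = 0`. No point of `Aᶜ` is related to a point of `Cᶜ`, so iterating Lusin separation
yields a Borel `R`-closed set `B` with `Aᶜ ⊆ B ⊆ C`. As `μ' B = ν' B ≤ ν' C = 0`, also `μ' = 0`,
and then `ν' = 0`: `ω` is a coupling.
-/

open Filter Set TopologicalSpace Topology
open scoped ENNReal BoundedContinuousFunction CompactlySupported

section Capacity

variable {Z : Type*} [TopologicalSpace Z]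

/-- A Choquet capacity, continuous from above along compact sets in the sense that a compact set
has open neighborhoods of almost the same capacity. -/
structure IsCapacity (c : Set Z → ℝ≥0∞) : Prop where
  mono : Monotone c
  iUnion_le : ∀ s : ℕ → Set Z, Monotone s → c (⋃ n, s n) ≤ ⨆ n, c (s n)
  exists_isOpen : ∀ K, IsCompact K → ∀ δ, c K < δ → ∃ U, K ⊆ U ∧ IsOpen U ∧ c U < δ

theorem isCompact_pi_univ_Iic (n : ℕ → ℕ) : IsCompact (univ.pi fun i ↦ Iic (n i)) :=
  isCompact_univ_pi fun _ ↦ (finite_Iic _).isCompact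

theorem exists_pi_Iio_Iic_subset {n : ℕ → ℕ} {U : Set (ℕ → ℕ)} (hU : IsOpen U)
    (hnU : (univ.pi fun i ↦ Iic (n i)) ⊆ U) : ∃ k, (Iio k).pi (fun i ↦ Iic (n i)) ⊆ U := by
  let V : ℕ → Set (ℕ → ℕ) := fun k ↦ {z | PiNat.cylinder z k ⊆ U}
  have hV_open (k : ℕ) : IsOpen (V k) := isOpen_iff_mem_nhds.2 fun z hz ↦
    mem_of_superset ((PiNat.isOpen_cylinder _ z k).mem_nhds (PiNat.self_mem_cylinder z k))
      fun y hy ↦ by rwa [mem_ofPred_eq, PiNat.mem_cylinder_iff_eq.1 hy]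
  have hV_mono : Monotone V := fun k l hkl z hz ↦ (PiNat.cylinder_anti z hkl).trans hz
  have hV_cover : (univ.pi fun i ↦ Iic (n i)) ⊆ ⋃ k, V k := fun z hz ↦ by
    obtain ⟨_, ⟨y, k, rfl⟩, hzy, hyU⟩ :=
      (PiNat.isTopologicalBasis_cylinders _).exists_subset_of_mem_open (hnU hz) hU
    exact mem_iUnion.2 ⟨k, by rwa [mem_ofPred_eq, PiNat.mem_cylinder_iff_eq.1 hzy]⟩
  obtain ⟨k, hk⟩ := (isCompact_pi_univ_Iic n).elim_directed_cover V hV_open hV_cover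
    hV_mono.directed_le
  refine ⟨k, fun x hx ↦ ?_⟩
  have hxn : x ⊓ n ∈ V k := hk fun i _ ↦ (inf_le_right : x i ⊓ n i ≤ n i)
  exact hxn fun i hi ↦ (inf_eq_left.2 (hx i hi)).symm

namespace IsCapacity

variable {c : Set Z → ℝ≥0∞} {f : (ℕ → ℕ) → Z}

theorem exists_lt_image_inter_le (hc : IsCapacity c) {δ : ℝ≥0∞} {S : Set (ℕ → ℕ)}
    (hS : δ < c (f '' S)) (k : ℕ) : ∃ m, δ < c (f '' (S ∩ {x | x k ≤ m})) := by
  have hmono : Monotone fun m ↦ f '' (S ∩ {x | x k ≤ m}) := fun m m' hm ↦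
    image_mono (inter_subset_inter_right _ fun x hx ↦ le_trans hx hm)
  have hunion : ⋃ m, f '' (S ∩ {x | x k ≤ m}) = f '' S := by
    have huniv : ⋃ m, {x : ℕ → ℕ | x k ≤ m} = univ :=
      iUnion_eq_univ_iff.2 fun x ↦ ⟨x k, le_refl (x k)⟩
    rw [← image_iUnion, ← inter_iUnion, huniv, inter_univ]
  exact lt_iSup_iff.1 ((hunion ▸ hS).trans_le (hc.iUnion_le _ hmono))

theorem exists_forall_lt_image_pi (hc : IsCapacity c) {δ : ℝ≥0∞} (hδ : δ < c (range f)) :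
    ∃ n : ℕ → ℕ, ∀ k, δ < c (f '' (Iio k).pi fun i ↦ Iic (n i)) := by
  choose! m hm using fun S hS k ↦ hc.exists_lt_image_inter_le (f := f) (δ := δ) (S := S) hS k
  let S : ℕ → Set (ℕ → ℕ) := fun k ↦ k.rec univ fun j S ↦ S ∩ {x | x j ≤ m S j}
  have hS : ∀ k, S k = (Iio k).pi fun i ↦ Iic (m (S i) i) := fun k ↦ by
    induction k with
    | zero => simp [S]
    | succ k ih =>
      change S k ∩ _ = _
      rw [← Order.succ_eq_add_one, Order.Iio_succ_eq_insert, insert_pi, ← ih, inter_comm]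
      rfl
  refine ⟨fun i ↦ m (S i) i, fun k ↦ hS k ▸ ?_⟩
  induction k with
  | zero => simpa [S] using hδ
  | succ k ih => exact hm _ ih k

theorem exists_isCompact_le (hc : IsCapacity c) {B : Set Z} (hB : AnalyticSet B) {δ : ℝ≥0∞}
    (hδ : δ < c B) : ∃ K ⊆ B, IsCompact K ∧ δ ≤ c K := by
  rw [AnalyticSet] at hB
  rcases hB with rfl | ⟨f, hf, rfl⟩
  · exact ⟨∅, Subset.rfl, isCompact_empty, hδ.le⟩
  obtain ⟨n, hn⟩ := hc.exists_forall_lt_image_pi hδ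
  have hK : IsCompact (f '' univ.pi fun i ↦ Iic (n i)) := (isCompact_pi_univ_Iic n).image hf
  refine ⟨_, image_subset_range _ _, hK, le_of_not_gt fun hlt ↦ ?_⟩
  obtain ⟨U, hKU, hU, hUδ⟩ := hc.exists_isOpen _ hK δ hlt
  obtain ⟨k, hk⟩ := exists_pi_Iio_Iic_subset (hU.preimage hf) (image_subset_iff.1 hKU)
  exact (hn k).not_gt ((hc.mono (image_subset_iff.2 hk)).trans_lt hUδ)

end IsCapacity

end Capacity

section CoverCost

theorem iUnion_subset_limsup_union_liminf {X Y : Type*} {B : ℕ → Set (X × Y)} (hB : Monotone B)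
    {A : ℕ → Set X} {C : ℕ → Set Y}
    (hcov : ∀ n, B n ⊆ Prod.fst ⁻¹' A n ∪ Prod.snd ⁻¹' C n) :
    ⋃ n, B n ⊆ Prod.fst ⁻¹' limsup A atTop ∪ Prod.snd ⁻¹' liminf C atTop := by
  refine iUnion_subset fun k p hp ↦ or_iff_not_imp_left.2 fun hA ↦ ?_
  rw [mem_preimage, mem_limsup_iff_frequently_mem, not_frequently] at hA
  rw [mem_preimage, mem_liminf_iff_eventually_mem]
  filter_upwards [hA, eventually_ge_atTop k] with n hAn hkn
  exact (hcov n (hB hkn hp)).resolve_left hAn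

variable {X Y : Type*} [MeasurableSpace X] [MeasurableSpace Y] {μ : Measure X} {ν : Measure Y}
  {B B' : Set (X × Y)} {A A' : Set X} {C C' : Set Y}

theorem measure_union_add_measure_inter_le (μ : Measure X) (A A' : Set X) :
    μ (A ∪ A') + μ (A ∩ A') ≤ μ A + μ A' := calc
  _ ≤ μ (toMeasurable μ A ∪ toMeasurable μ A') + μ (toMeasurable μ A ∩ toMeasurable μ A') := by
    gcongr <;> exact subset_toMeasurable _ _
  _ = μ A + μ A' := by
    rw [measure_union_add_inter _ (measurableSet_toMeasurable _ _), measure_toMeasurable,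
      measure_toMeasurable]

/-- The least total measure `μ A + ν C` of a cover of `B` by a vertical strip `A × Y` and a
horizontal strip `X × C`: the dual value of the problem of transporting as much mass as possible
from `μ` to `ν` along `B`. -/
noncomputable def coverCost (μ : Measure X) (ν : Measure Y) (B : Set (X × Y)) : ℝ≥0∞ :=
  ⨅ (A) (C) (_ : B ⊆ Prod.fst ⁻¹' A ∪ Prod.snd ⁻¹' C), μ A + ν C

theorem coverCost_le (h : B ⊆ Prod.fst ⁻¹' A ∪ Prod.snd ⁻¹' C) : coverCost μ ν B ≤ μ A + ν C :=
  iInf_le_of_le A <| iInf_le_of_le C <| iInf_le _ h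

theorem exists_cover_of_coverCost_lt {c : ℝ≥0∞} (h : coverCost μ ν B < c) :
    ∃ A C, B ⊆ Prod.fst ⁻¹' A ∪ Prod.snd ⁻¹' C ∧ μ A + ν C < c := by
  simpa only [coverCost, iInf_lt_iff, exists_prop] using h

theorem exists_cover_le_coverCost_add (hB : coverCost μ ν B ≠ ∞) {ε : ℝ≥0∞} (hε : 0 < ε) :
    ∃ A C, B ⊆ Prod.fst ⁻¹' A ∪ Prod.snd ⁻¹' C ∧ μ A + ν C ≤ coverCost μ ν B + ε := by
  obtain ⟨A, C, hcov, hlt⟩ := exists_cover_of_coverCost_lt (ENNReal.lt_add_right hB hε.ne')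
  exact ⟨A, C, hcov, hlt.le⟩

theorem coverCost_mono : Monotone (coverCost μ ν) := fun _ _ h ↦
  le_iInf fun _ ↦ le_iInf fun _ ↦ le_iInf fun hcov ↦ coverCost_le (h.trans hcov)

-- `(A ∩ A', C ∪ C')` also covers `B`, so it costs at least as much as `(A, C)` up to `ε`; what
-- is left of the two covers after removing it is `(A ∪ A', C ∩ C')`.
theorem measure_union_add_measure_inter_le_of_cover
    (hcov : B ⊆ Prod.fst ⁻¹' A ∪ Prod.snd ⁻¹' C) (hcov' : B ⊆ Prod.fst ⁻¹' A' ∪ Prod.snd ⁻¹' C')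
    (hB : coverCost μ ν B ≠ ∞) {ε : ℝ≥0∞} (hle : μ A + ν C ≤ coverCost μ ν B + ε) :
    μ (A ∪ A') + ν (C ∩ C') ≤ μ A' + ν C' + ε := by
  have hcov'' : B ⊆ Prod.fst ⁻¹' (A ∩ A') ∪ Prod.snd ⁻¹' (C ∪ C') := fun p hp ↦ by
    have h := hcov hp
    have h' := hcov' hp
    simp only [mem_union, mem_preimage, mem_inter_iff] at h h' ⊢
    tauto
  refine (ENNReal.add_le_add_iff_left hB).1 ?_
  calc
    _ ≤ μ (A ∩ A') + ν (C ∪ C') + (μ (A ∪ A') + ν (C ∩ C')) := by grw [coverCost_le hcov'']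
    _ = (μ (A ∪ A') + μ (A ∩ A')) + (ν (C ∪ C') + ν (C ∩ C')) := by ring
    _ ≤ (μ A + μ A') + (ν C + ν C') := by grw [measure_union_add_measure_inter_le,
        measure_union_add_measure_inter_le]
    _ = (μ A + ν C) + (μ A' + ν C') := by ring
    _ ≤ (coverCost μ ν B + ε) + (μ A' + ν C') := by grw [hle]
    _ = coverCost μ ν B + (μ A' + ν C' + ε) := by ring

theorem measure_biUnion_add_measure_biInter_le {B : ℕ → Set (X × Y)} (hB : Monotone B)
    (hfin : ∀ n, coverCost μ ν (B n) ≠ ∞) {A : ℕ → Set X} {C : ℕ → Set Y}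
    (hcov : ∀ n, B n ⊆ Prod.fst ⁻¹' A n ∪ Prod.snd ⁻¹' C n) {ε : ℕ → ℝ≥0∞}
    (hle : ∀ n, μ (A n) + ν (C n) ≤ coverCost μ ν (B n) + ε n) (k : ℕ) :
    μ (⋃ i ≤ k, A i) + ν (⋂ i ≤ k, C i) ≤
      coverCost μ ν (B k) + ∑ i ∈ Finset.range (k + 1), ε i := by
  induction k generalizing B A C ε with
  | zero => simpa using hle 0
  | succ k ih =>
    have hcov_tail : B 0 ⊆ Prod.fst ⁻¹' (⋃ i ≤ k, A (i + 1)) ∪ Prod.snd ⁻¹' (⋂ i ≤ k, C (i + 1)) :=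
      fun p hp ↦ by
      simp only [mem_union, mem_preimage, mem_iUnion, mem_iInter]
      by_contra! h
      obtain ⟨hA, i, hi, hC⟩ := h
      exact (hcov (i + 1) (hB (Nat.zero_le _) hp)).elim (hA i hi) hC
    have hle_tail := ih (hB.comp (add_left_mono (a := 1))) (fun n ↦ hfin (n + 1))
      (fun n ↦ hcov (n + 1)) (fun n ↦ hle (n + 1))
    rw [biUnion_le_succ', biInter_le_succ', Finset.sum_range_succ', ← add_assoc]
    exact (measure_union_add_measure_inter_le_of_cover (hcov 0) hcov_tail (hfin 0) (hle 0)).trans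
      (add_le_add_left hle_tail _)

theorem measure_iUnion_add_measure_iInter_le {B : ℕ → Set (X × Y)} (hB : Monotone B)
    (hfin : ∀ n, coverCost μ ν (B n) ≠ ∞) {A : ℕ → Set X} {C : ℕ → Set Y}
    (hcov : ∀ n, B n ⊆ Prod.fst ⁻¹' A n ∪ Prod.snd ⁻¹' C n) {ε : ℕ → ℝ≥0∞}
    (hle : ∀ n, μ (A n) + ν (C n) ≤ coverCost μ ν (B n) + ε n) :
    μ (⋃ n, A n) + ν (⋂ n, C n) ≤ (⨆ n, coverCost μ ν (B n)) + ∑' n, ε n := by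
  rw [measure_iUnion_eq_iSup_accumulate, ENNReal.iSup_add]
  refine iSup_le fun k ↦ ?_
  calc
    _ ≤ μ (⋃ i ≤ k, A i) + ν (⋂ i ≤ k, C i) := by
      rw [accumulate_def]
      gcongr
      exact subset_iInter fun _ ↦ Subset.rfl
    _ ≤ coverCost μ ν (B k) + ∑ i ∈ Finset.range (k + 1), ε i :=
      measure_biUnion_add_measure_biInter_le hB hfin hcov hle k
    _ ≤ _ := add_le_add (le_iSup (fun n ↦ coverCost μ ν (B n)) k) (ENNReal.sum_le_tsum _)

theorem coverCost_iUnion_le {B : ℕ → Set (X × Y)} (hB : Monotone B) :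
    coverCost μ ν (⋃ n, B n) ≤ ⨆ n, coverCost μ ν (B n) := by
  by_cases htop : ⨆ n, coverCost μ ν (B n) = ∞
  · exact htop ▸ le_top
  have hfin (n : ℕ) : coverCost μ ν (B n) ≠ ∞ :=
    ne_top_of_le_ne_top htop (le_iSup (fun n ↦ coverCost μ ν (B n)) n)
  refine ENNReal.le_of_forall_pos_le_add fun δ hδ _ ↦ ?_
  obtain ⟨ε, hε, hεδ⟩ := ENNReal.exists_pos_sum_of_countable'
    (ENNReal.coe_ne_zero.2 hδ.ne') ℕ
  choose A C hcov hle using fun n ↦ exists_cover_le_coverCost_add (hfin n) (hε n)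
  have htail (n : ℕ) : μ (⋃ i, A (i + n)) + ν (⋂ i, C (i + n)) ≤
      (⨆ k, coverCost μ ν (B k)) + δ := calc
    _ ≤ (⨆ i, coverCost μ ν (B (i + n))) + ∑' i, ε (i + n) :=
      measure_iUnion_add_measure_iInter_le (hB.comp fun _ _ h ↦ Nat.add_le_add_right h n)
        (fun i ↦ hfin (i + n)) (fun i ↦ hcov (i + n)) (fun i ↦ hle (i + n))
    _ ≤ _ := add_le_add (iSup_comp_le (fun k ↦ coverCost μ ν (B k)) (· + n))
      ((ENNReal.tsum_comp_le_tsum_of_injective (add_left_injective n) ε).trans hεδ.le)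
  have hmono : Monotone fun n ↦ ⋂ i, C (i + n) := fun m n hmn ↦ subset_iInter fun i ↦ by
    simpa [add_assoc, Nat.sub_add_cancel hmn] using iInter_subset (fun i ↦ C (i + m)) (i + (n - m))
  refine (coverCost_le (iUnion_subset_limsup_union_liminf hB hcov)).trans ?_
  rw [limsup_eq_iInf_iSup_of_nat', liminf_eq_iSup_iInf_of_nat']
  simp only [iSup_eq_iUnion, iInf_eq_iInter]
  rw [hmono.measure_iUnion, ENNReal.add_iSup]
  exact iSup_le fun n ↦ le_trans (by grw [iInter_subset _ n]) (htail n)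

theorem isCapacity_coverCost [TopologicalSpace X] [TopologicalSpace Y] [μ.OuterRegular]
    [ν.OuterRegular] : IsCapacity (coverCost μ ν) where
  mono := coverCost_mono
  iUnion_le _ := coverCost_iUnion_le
  exists_isOpen K _ δ hδ := by
    obtain ⟨A, C, hcov, hlt⟩ := exists_cover_of_coverCost_lt hδ
    obtain ⟨ε, hε, hεδ⟩ := ENNReal.lt_iff_exists_add_pos_lt.1 hlt
    have hε2 : (ε / 2 : ℝ≥0∞) ≠ 0 := by simpa using hε.ne'
    obtain ⟨U, hAU, hU, hμU⟩ := A.exists_isOpen_le_add μ hε2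
    obtain ⟨V, hCV, hV, hνV⟩ := C.exists_isOpen_le_add ν hε2
    refine ⟨Prod.fst ⁻¹' U ∪ Prod.snd ⁻¹' V, hcov.trans (by gcongr),
      (hU.preimage continuous_fst).union (hV.preimage continuous_snd), ?_⟩
    calc
      _ ≤ μ U + ν V := coverCost_le Subset.rfl
      _ ≤ (μ A + ε / 2) + (ν C + ε / 2) := add_le_add hμU hνV
      _ = μ A + ν C + ε := by rw [add_add_add_comm, ENNReal.add_halves]
      _ < δ := hεδ

theorem exists_null_cover_of_coverCost_eq_zero (h : coverCost μ ν B = 0) :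
    ∃ A C, MeasurableSet A ∧ MeasurableSet C ∧ μ A = 0 ∧ ν C = 0 ∧
      B ⊆ Prod.fst ⁻¹' A ∪ Prod.snd ⁻¹' C := by
  obtain ⟨ε, hε, hε1⟩ := ENNReal.exists_pos_sum_of_countable' one_ne_zero ℕ
  choose A C hcov hlt using fun n ↦ exists_cover_of_coverCost_lt (h.trans_lt (hε n))
  have hA : μ (limsup A atTop) = 0 := measure_limsup_atTop_eq_zero <| ne_top_of_lt <|
    (ENNReal.tsum_le_tsum fun n ↦ le_self_add.trans (hlt n).le).trans_lt hε1
  have hC : ν (limsup C atTop) = 0 := measure_limsup_atTop_eq_zero <| ne_top_of_lt <|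
    (ENNReal.tsum_le_tsum fun n ↦ le_add_self.trans (hlt n).le).trans_lt hε1
  refine ⟨toMeasurable μ (limsup A atTop), toMeasurable ν (limsup C atTop),
    measurableSet_toMeasurable _ _, measurableSet_toMeasurable _ _,
    (measure_toMeasurable _).trans hA, (measure_toMeasurable _).trans hC, fun p hp ↦ ?_⟩
  have hfreq : (∃ᶠ n in atTop, p.1 ∈ A n) ∨ ∃ᶠ n in atTop, p.2 ∈ C n :=
    frequently_or_distrib.1 (Frequently.of_forall fun n ↦ hcov n hp)
  exact hfreq.imp (fun hp1 ↦ subset_toMeasurable _ _ (mem_limsup_iff_frequently_mem.2 hp1))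
    fun hp2 ↦ subset_toMeasurable _ _ (mem_limsup_iff_frequently_mem.2 hp2)

end CoverCost

section Duality

variable {E F : Type*} [AddCommGroup E] [Module ℝ E] [AddCommGroup F] [Module ℝ F]

theorem exists_nonneg_linearMap_prod (S : PointedCone ℝ (E × F)) {e : E} (he : e ≠ 0) (δ : ℝ)
    (J : F →ₗ[ℝ] ℝ) (nonneg : ∀ (c : ℝ) φ, (c • e, φ) ∈ S → 0 ≤ c * δ + J φ)
    (dense : ∀ u, ∃ c : ℝ, (c • e + u, 0) ∈ S) :
    ∃ g : E × F →ₗ[ℝ] ℝ, g (e, 0) = δ ∧ (∀ φ, g (0, φ) = J φ) ∧ ∀ x ∈ S, 0 ≤ g x := by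
  let f : E × F →ₗ.[ℝ] ℝ := (LinearPMap.mkSpanSingleton e δ he).coprod (J.toPMap ⊤)
  have smul_mem_domain (c : ℝ) (φ : F) : (c • e, φ) ∈ f.domain :=
    ⟨Submodule.smul_mem _ c (Submodule.mem_span_singleton_self e), trivial⟩
  have f_apply (c : ℝ) (φ : F) : f ⟨(c • e, φ), smul_mem_domain c φ⟩ = c * δ + J φ :=
    congrArg (· + J φ) (LinearPMap.mkSpanSingleton'_apply e δ _ c _)
  have f_nonneg (x : f.domain) (hx : (x : E × F) ∈ S) : 0 ≤ f x := by
    obtain ⟨⟨u, φ⟩, hu, hφ⟩ := x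
    obtain ⟨c, rfl⟩ := Submodule.mem_span_singleton.1 hu
    exact (nonneg c φ hx).trans_eq (f_apply c φ).symm
  have f_dense (y : E × F) : ∃ x : f.domain, (x : E × F) + y ∈ S := by
    obtain ⟨c, hc⟩ := dense y.1
    exact ⟨⟨(c • e, -y.2), smul_mem_domain _ _⟩, by simpa [Prod.add_def] using hc⟩
  obtain ⟨g, hgf, hg⟩ := riesz_extension S f f_nonneg f_dense
  have g_apply (c : ℝ) (φ : F) : g (c • e, φ) = c * δ + J φ :=
    (hgf ⟨_, smul_mem_domain c φ⟩).trans (f_apply c φ)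
  exact ⟨g, by simpa using g_apply 1 0, fun φ ↦ by simpa using g_apply 0 φ, hg⟩

-- `L` is the restriction to `E` of a linear functional on `E × F` which extends
-- `(c • e, φ) ↦ c * δ + J φ` and is nonnegative on the cone of `(u, φ)` with `φ ∈ P`, `-u ≤ T φ`.
theorem exists_linearMap_le_of_le [PartialOrder E] [IsOrderedAddMonoid E] [PosSMulMono ℝ E]
    {P : PointedCone ℝ F} {T : F →ₗ[ℝ] E} {J : F →ₗ[ℝ] ℝ} (hJ : ∀ φ ∈ P, 0 ≤ J φ) {e : E}
    (he : ∀ u, ∃ c : ℝ, u ≤ c • e) {δ : ℝ} (hδ : 0 < δ) (h : ∀ φ ∈ P, e ≤ T φ → δ ≤ J φ) :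
    ∃ L : E →ₗ[ℝ] ℝ, (∀ u, 0 ≤ u → 0 ≤ L u) ∧ L e = δ ∧ ∀ φ ∈ P, L (T φ) ≤ J φ := by
  have he0 : e ≠ 0 := by
    rintro rfl
    exact hδ.not_ge (by simpa using h 0 P.zero_mem (map_zero T).ge)
  let S : PointedCone ℝ (E × F) := P.comap (LinearMap.snd ℝ E F) ⊓
    (PointedCone.positive ℝ E).comap (LinearMap.fst ℝ E F + T ∘ₗ LinearMap.snd ℝ E F)
  have mem_S {u : E} {φ : F} : (u, φ) ∈ S ↔ φ ∈ P ∧ 0 ≤ u + T φ := Iff.rfl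
  have S_nonneg (c : ℝ) (φ : F) (hcφ : (c • e, φ) ∈ S) : 0 ≤ c * δ + J φ := by
    obtain ⟨hφP, hcφ⟩ := mem_S.1 hcφ
    rcases le_or_gt 0 c with hc | hc
    · have := hJ φ hφP
      positivity
    · have hle : e ≤ T ((-c)⁻¹ • φ) := by
        rw [map_smul, le_inv_smul_iff_of_pos (neg_pos.2 hc), neg_smul]
        exact neg_le_iff_add_nonneg'.2 hcφ
      have hδJ := h _ (P.smul_mem (inv_nonneg.2 (neg_pos.2 hc).le) hφP) hle
      rw [map_smul, smul_eq_mul, le_inv_mul_iff₀ (neg_pos.2 hc)] at hδJ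
      linarith
  have S_dense (u : E) : ∃ c : ℝ, (c • e + u, 0) ∈ S := by
    obtain ⟨c, hc⟩ := he (-u)
    exact ⟨c, mem_S.2 (by simpa [neg_le_iff_add_nonneg] using hc)⟩
  obtain ⟨g, hge, hgJ, hg⟩ := exists_nonneg_linearMap_prod S he0 δ J S_nonneg S_dense
  refine ⟨g ∘ₗ LinearMap.inl ℝ E F, fun u hu ↦ hg _ (mem_S.2 (by simpa using hu)), hge,
    fun φ hφ ↦ ?_⟩
  have hsplit : g (-T φ, φ) = J φ - g (T φ, 0) := by simp [← hgJ φ, ← map_sub]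
  have hg_nonneg : 0 ≤ g (-T φ, φ) := hg _ (mem_S.2 (by simpa using hφ))
  exact sub_nonneg.1 (hg_nonneg.trans_eq hsplit)

end Duality

section FiniteMeasures

theorem measure_le_of_forall_integral_le {X : Type*} [TopologicalSpace X] [HasOuterApproxClosed X]
    [MeasurableSpace X] [OpensMeasurableSpace X] {μ η : Measure X} [IsFiniteMeasure μ]
    [IsFiniteMeasure η] [η.WeaklyRegular]
    (h : ∀ f : X →ᵇ ℝ, 0 ≤ f → ∫ x, f x ∂η ≤ ∫ x, f x ∂μ) : η ≤ μ := by
  have hclosed (F : Set X) (hF : IsClosed F) : η F ≤ μ F := by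
    refine le_of_tendsto_of_tendsto' (HasOuterApproxClosed.tendsto_lintegral_apprSeq hF η)
      (HasOuterApproxClosed.tendsto_lintegral_apprSeq hF μ) fun n ↦ ?_
    have hreal := h ((hF.apprSeq n).comp _ NNReal.isometry_coe.lipschitz)
      fun x ↦ NNReal.coe_nonneg _
    rwa [← ENNReal.toReal_le_toReal ((hF.apprSeq n).lintegral_lt_top_of_nnreal η).ne
      ((hF.apprSeq n).lintegral_lt_top_of_nnreal μ).ne,
      BoundedContinuousFunction.toReal_lintegral_coe_eq_integral,
      BoundedContinuousFunction.toReal_lintegral_coe_eq_integral]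
  refine Measure.le_iff.2 fun s hs ↦ ?_
  rw [hs.measure_eq_iSup_isClosed_of_ne_top (measure_ne_top _ _)]
  exact iSup₂_le fun F hFs ↦ iSup_le fun hF ↦ (hclosed F hF).trans (measure_mono hFs)

theorem exists_measure_integral_eq {Z : Type*} [TopologicalSpace Z] [CompactSpace Z] [T2Space Z]
    [MeasurableSpace Z] [BorelSpace Z] (L : C(Z, ℝ) →ₗ[ℝ] ℝ) (hL : ∀ u, 0 ≤ u → 0 ≤ L u) :
    ∃ ρ : Measure Z, IsFiniteMeasure ρ ∧ ∀ u : C(Z, ℝ), ∫ z, u z ∂ρ = L u := by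
  let Λ : C_c(Z, ℝ) →ₚ[ℝ] ℝ := PositiveLinearMap.mk₀
    { toFun := fun u ↦ L u.toContinuousMap
      map_add' := fun u v ↦ L.map_add u.toContinuousMap v.toContinuousMap
      map_smul' := fun c u ↦ L.map_smul c u.toContinuousMap }
    fun u hu ↦ hL u.toContinuousMap hu
  exact ⟨RealRMK.rieszMeasure Λ, inferInstance, fun u ↦
    RealRMK.integral_rieszMeasure Λ (CompactlySupportedContinuousMap.continuousMapEquiv u)⟩

theorem exists_measure_map_le {X Y Z : Type*} [TopologicalSpace X] [PseudoMetrizableSpace X]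
    [MeasurableSpace X] [BorelSpace X] [TopologicalSpace Y] [PseudoMetrizableSpace Y]
    [MeasurableSpace Y] [BorelSpace Y] [TopologicalSpace Z] [CompactSpace Z] [T2Space Z]
    [MeasurableSpace Z] [BorelSpace Z] {μ : Measure X} [IsFiniteMeasure μ] {ν : Measure Y}
    [IsFiniteMeasure ν] (a : C(Z, X)) (b : C(Z, Y)) {δ : ℝ} (hδ : 0 < δ)
    (h : ∀ (f : X →ᵇ ℝ) (g : Y →ᵇ ℝ), 0 ≤ f → 0 ≤ g → (∀ z, 1 ≤ f (a z) + g (b z)) →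
      δ ≤ ∫ x, f x ∂μ + ∫ y, g y ∂ν) :
    ∃ ρ : Measure Z, IsFiniteMeasure ρ ∧ ρ.real univ = δ ∧ ρ.map a ≤ μ ∧ ρ.map b ≤ ν := by
  let P : PointedCone ℝ ((X →ᵇ ℝ) × (Y →ᵇ ℝ)) :=
    { carrier := {φ | 0 ≤ φ.1 ∧ 0 ≤ φ.2}
      add_mem' := fun hφ hψ ↦ ⟨add_nonneg hφ.1 hψ.1, add_nonneg hφ.2 hψ.2⟩
      zero_mem' := ⟨le_rfl, le_rfl⟩
      smul_mem' := fun c φ hφ ↦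
        ⟨fun x ↦ mul_nonneg c.2 (hφ.1 x), fun y ↦ mul_nonneg c.2 (hφ.2 y)⟩ }
  let T : (X →ᵇ ℝ) × (Y →ᵇ ℝ) →ₗ[ℝ] C(Z, ℝ) :=
    { toFun := fun φ ↦ φ.1.toContinuousMap.comp a + φ.2.toContinuousMap.comp b
      map_add' := fun φ ψ ↦ by ext z; exact add_add_add_comm _ _ _ _
      map_smul' := fun c φ ↦ by ext z; exact (mul_add _ _ _).symm }
  let J : (X →ᵇ ℝ) × (Y →ᵇ ℝ) →ₗ[ℝ] ℝ :=
    { toFun := fun φ ↦ ∫ x, φ.1 x ∂μ + ∫ y, φ.2 y ∂ν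
      map_add' := fun φ ψ ↦ by
        simp only [Prod.fst_add, Prod.snd_add, BoundedContinuousFunction.coe_add, Pi.add_apply]
        rw [integral_add (φ.1.integrable μ) (ψ.1.integrable μ),
          integral_add (φ.2.integrable ν) (ψ.2.integrable ν), add_add_add_comm]
      map_smul' := fun c φ ↦ by simp [integral_const_mul, mul_add] }
  have hJ (φ) (hφ : φ ∈ P) : 0 ≤ J φ := add_nonneg (integral_nonneg hφ.1) (integral_nonneg hφ.2)
  have hone (u : C(Z, ℝ)) : ∃ c : ℝ, u ≤ c • (1 : C(Z, ℝ)) :=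
    ⟨‖u‖, fun z ↦ by simpa using (le_abs_self _).trans (u.norm_coe_le_norm z)⟩
  obtain ⟨L, hL, hL1, hLT⟩ := exists_linearMap_le_of_le (T := T) hJ hone hδ
    fun φ hφ hTφ ↦ h φ.1 φ.2 hφ.1 hφ.2 hTφ
  obtain ⟨ρ, hρ, hint⟩ := exists_measure_integral_eq L hL
  refine ⟨ρ, hρ, by simpa [hL1] using hint 1, measure_le_of_forall_integral_le fun f hf ↦ ?_,
    measure_le_of_forall_integral_le fun g hg ↦ ?_⟩
  · rw [integral_map a.continuous.aemeasurable f.continuous.aestronglyMeasurable]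
    simpa [T, J, ← hint] using hLT (f, 0) ⟨hf, le_rfl⟩
  · rw [integral_map b.continuous.aemeasurable g.continuous.aestronglyMeasurable]
    simpa [T, J, ← hint] using hLT (0, g) ⟨le_rfl, hg⟩

end FiniteMeasures

section MaximalMeasure

theorem exists_forall_le_two_mul {ι : Type*} {p : ι → Prop} (hp : ∃ i, p i) {m : ι → ℝ≥0∞}
    {c : ℝ≥0∞} (hc : c ≠ ∞) (hm : ∀ i, p i → m i ≤ c) : ∃ i, p i ∧ ∀ j, p j → m j ≤ 2 * m i := by
  set s := ⨆ j, ⨆ _ : p j, m j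
  have hs (j) (hj : p j) : m j ≤ s := le_iSup₂ (f := fun j (_ : p j) ↦ m j) j hj
  obtain ⟨i, hi⟩ := hp
  by_cases hs0 : s = 0
  · exact ⟨i, hi, fun j hj ↦ (hs j hj).trans (hs0.trans_le bot_le)⟩
  · have hs_top : s ≠ ∞ := ne_top_of_le_ne_top hc (iSup₂_le hm)
    obtain ⟨k, hk, hlt⟩ : ∃ k, ∃ _ : p k, s / 2 < m k := by
      simpa only [s, lt_iSup_iff] using ENNReal.half_lt_self hs0 hs_top
    exact ⟨k, hk, fun j hj ↦ (hs j hj).trans (ENNReal.div_le_iff_le_mul (by simp) (by simp)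
      |>.1 hlt.le |>.trans_eq (mul_comm _ _))⟩

variable {Z : Type*} [MeasurableSpace Z]

theorem sum_eq_finsetSum_add_sum (f : ℕ → Measure Z) (n : ℕ) :
    Measure.sum f = ∑ i ∈ Finset.range n, f i + Measure.sum fun i ↦ f (i + n) := by
  ext s hs
  simp only [Measure.sum_apply _ hs, Measure.add_apply, Measure.finsetSum_apply]
  exact (ENNReal.summable.sum_add_tsum_nat_add' (k := n)).symm

-- Greedy exhaustion: at each step add a measure of at least half the mass that can still be added.
theorem exists_measure_forall_add_imp_eq_zero {p : Measure Z → Prop} (hp0 : p 0)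
    (hp_sum : ∀ f : ℕ → Measure Z, (∀ n, p (∑ i ∈ Finset.range n, f i)) → p (Measure.sum f))
    {c : ℝ≥0∞} (hc : c ≠ ∞) (hpc : ∀ ω, p ω → ω univ ≤ c) :
    ∃ ω, p ω ∧ ∀ ρ, p (ω + ρ) → ρ = 0 := by
  have greedy (ω : Measure Z) (hω : p ω) :
      ∃ η, p (ω + η) ∧ ∀ ρ, p (ω + ρ) → ρ univ ≤ 2 * η univ :=
    exists_forall_le_two_mul (p := fun η ↦ p (ω + η)) ⟨0, by simpa using hω⟩ hc
      fun η hη ↦ le_add_self.trans (hpc _ hη)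
  choose! F hpF hF using greedy
  let W : ℕ → Measure Z := fun n ↦ (fun ω ↦ ω + F ω)^[n] 0
  have W_succ (n : ℕ) : W (n + 1) = W n + F (W n) := Function.iterate_succ_apply' _ _ _
  have W_eq (n : ℕ) : W n = ∑ i ∈ Finset.range n, F (W i) := by
    induction n with
    | zero => rfl
    | succ n ih => rw [W_succ, Finset.sum_range_succ, ← ih]
  have hpW (n : ℕ) : p (W n) := by
    induction n with
    | zero => exact hp0
    | succ n ih => exact W_succ n ▸ hpF _ ih
  have hpω : p (Measure.sum fun n ↦ F (W n)) := hp_sum _ fun n ↦ W_eq n ▸ hpW n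
  refine ⟨_, hpω, fun ρ hρ ↦ Measure.measure_univ_eq_zero.1 ?_⟩
  have hρ_le (n : ℕ) : ρ univ ≤ 2 * F (W n) univ := by
    rw [sum_eq_finsetSum_add_sum _ n, ← W_eq, add_assoc] at hρ
    exact le_add_self.trans (hF _ (hpW n) _ hρ)
  have hsum : ∑' n, F (W n) univ ≠ ∞ := by
    rw [← Measure.sum_apply _ .univ]
    exact ne_top_of_le_ne_top hc (hpc _ hpω)
  have htendsto : Tendsto (fun n ↦ 2 * F (W n) univ) atTop (𝓝 0) := by
    simpa using ENNReal.Tendsto.const_mul (ENNReal.tendsto_atTop_zero_of_tsum_ne_top hsum)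
      (.inr ENNReal.ofNat_ne_top)
  exact le_zero_iff.1 (ge_of_tendsto' htendsto hρ_le)

end MaximalMeasure

section PartialCoupling

theorem map_sum_le {Z X : Type*} [MeasurableSpace Z] [MeasurableSpace X] {μ : Measure X}
    {g : Z → X} (hg : Measurable g) {f : ℕ → Measure Z}
    (h : ∀ n, (∑ i ∈ Finset.range n, f i).map g ≤ μ) : (Measure.sum f).map g ≤ μ := by
  refine Measure.le_iff.2 fun A hA ↦ ?_
  rw [Measure.map_apply hg hA, Measure.sum_apply _ (hg hA)]
  refine ENNReal.tsum_le_of_sum_range_le fun n ↦ ?_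
  rw [← Measure.finsetSum_apply, ← Measure.map_apply hg hA]
  exact h n A

variable {X Y : Type*} [MeasurableSpace X] [MeasurableSpace Y]

/-- `ω` transports part of `μ` to part of `ν` along `B`; no measurability of `B` is required. -/
structure IsPartialCoupling (B : Set (X × Y)) (μ : Measure X) (ν : Measure Y)
    (ω : Measure (X × Y)) : Prop where
  apply_compl : ω Bᶜ = 0
  fst_le : ω.fst ≤ μ
  snd_le : ω.snd ≤ ν

namespace IsPartialCoupling

variable {B B' : Set (X × Y)} {μ μ' : Measure X} {ν ν' : Measure Y} {ω ω' : Measure (X × Y)}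

theorem zero : IsPartialCoupling B μ ν 0 where
  apply_compl := rfl
  fst_le := by simpa using Measure.zero_le μ
  snd_le := by simpa using Measure.zero_le ν

theorem mono (h : IsPartialCoupling B μ ν ω) (hB : B ⊆ B') : IsPartialCoupling B' μ ν ω where
  apply_compl := measure_mono_null (compl_subset_compl.2 hB) h.apply_compl
  fst_le := h.fst_le
  snd_le := h.snd_le

theorem univ_le (h : IsPartialCoupling B μ ν ω) : ω univ ≤ μ univ :=
  Measure.fst_univ (ρ := ω) ▸ h.fst_le univ

theorem add (h : IsPartialCoupling B μ ν ω) (h' : IsPartialCoupling B μ' ν' ω') :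
    IsPartialCoupling B (μ + μ') (ν + ν') (ω + ω') where
  apply_compl := by simp [h.apply_compl, h'.apply_compl]
  fst_le := Measure.fst_add.trans_le (add_le_add h.fst_le h'.fst_le)
  snd_le := Measure.snd_add.trans_le (add_le_add h.snd_le h'.snd_le)

theorem sum {f : ℕ → Measure (X × Y)}
    (h : ∀ n, IsPartialCoupling B μ ν (∑ i ∈ Finset.range n, f i)) :
    IsPartialCoupling B μ ν (Measure.sum f) where
  apply_compl := Measure.sum_apply_eq_zero.2 fun n ↦ by
    have hn := (h (n + 1)).apply_compl
    rw [Finset.sum_range_succ, Measure.add_apply, add_eq_zero] at hn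
    exact hn.2
  fst_le := map_sum_le measurable_fst fun n ↦ (h n).fst_le
  snd_le := map_sum_le measurable_snd fun n ↦ (h n).snd_le

theorem exists_maximal (B : Set (X × Y)) (μ : Measure X) (ν : Measure Y) [IsFiniteMeasure μ] :
    ∃ ω, IsPartialCoupling B μ ν ω ∧ ∀ ρ, IsPartialCoupling B μ ν (ω + ρ) → ρ = 0 :=
  exists_measure_forall_add_imp_eq_zero zero (fun _ ↦ sum) (measure_ne_top μ univ)
    fun _ ↦ univ_le

end IsPartialCoupling

section Existence

variable [TopologicalSpace X] [BorelSpace X] [TopologicalSpace Y] [BorelSpace Y]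
  {μ : Measure X} [IsFiniteMeasure μ] {ν : Measure Y} [IsFiniteMeasure ν] {B : Set (X × Y)}

theorem coverCost_le_two_mul_integral_add {f : X →ᵇ ℝ} {g : Y →ᵇ ℝ} (hf : 0 ≤ f) (hg : 0 ≤ g)
    (hfg : ∀ p ∈ B, 1 ≤ f p.1 + g p.2) :
    coverCost μ ν B ≤ ENNReal.ofReal (2 * (∫ x, f x ∂μ + ∫ y, g y ∂ν)) := by
  have hcov : B ⊆ Prod.fst ⁻¹' {x | 1 / 2 ≤ f x} ∪ Prod.snd ⁻¹' {y | 1 / 2 ≤ g y} := fun p hp ↦ by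
    by_contra! h
    simp only [mem_union, mem_preimage, mem_ofPred_eq, not_or, not_le] at h
    linarith [hfg p hp]
  have hμ : 1 / 2 * μ.real {x | 1 / 2 ≤ f x} ≤ ∫ x, f x ∂μ :=
    mul_meas_ge_le_integral_of_nonneg (.of_forall hf) (f.integrable μ) (1 / 2)
  have hν : 1 / 2 * ν.real {y | 1 / 2 ≤ g y} ≤ ∫ y, g y ∂ν :=
    mul_meas_ge_le_integral_of_nonneg (.of_forall hg) (g.integrable ν) (1 / 2)
  calc coverCost μ ν B ≤ μ {x | 1 / 2 ≤ f x} + ν {y | 1 / 2 ≤ g y} := coverCost_le hcov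
    _ = ENNReal.ofReal (μ.real {x | 1 / 2 ≤ f x} + ν.real {y | 1 / 2 ≤ g y}) := by
      rw [ENNReal.ofReal_add (by positivity) (by positivity), ofReal_measureReal,
        ofReal_measureReal]
    _ ≤ ENNReal.ofReal (2 * (∫ x, f x ∂μ + ∫ y, g y ∂ν)) :=
      ENNReal.ofReal_le_ofReal (by linarith)

variable [MetrizableSpace X] [MetrizableSpace Y] [SecondCountableTopologyEither X Y]

theorem exists_isPartialCoupling_of_isCompact {K : Set (X × Y)} (hK : IsCompact K)
    (h : coverCost μ ν K ≠ 0) : ∃ ω, ω ≠ 0 ∧ IsPartialCoupling K μ ν ω := by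
  have : CompactSpace K := isCompact_iff_compactSpace.1 hK
  have hfin : coverCost μ ν K ≠ ∞ :=
    ne_top_of_le_ne_top (by finiteness) (coverCost_le (A := univ) (C := univ) (by simp))
  have hδ : 0 < (coverCost μ ν K).toReal / 2 := half_pos (ENNReal.toReal_pos h hfin)
  obtain ⟨ρ, -, hρ, hfst, hsnd⟩ := exists_measure_map_le (Z := K) (μ := μ) (ν := ν)
    ⟨fun p ↦ p.1.1, by fun_prop⟩ ⟨fun p ↦ p.1.2, by fun_prop⟩ hδ fun f g hf hg hfg ↦ by
      have hle := ENNReal.toReal_mono ENNReal.ofReal_ne_top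
        (coverCost_le_two_mul_integral_add (μ := μ) (ν := ν) hf hg fun p hp ↦ hfg ⟨p, hp⟩)
      rw [ENNReal.toReal_ofReal] at hle
      · linarith
      · have := integral_nonneg (f := f) (μ := μ) hf
        have := integral_nonneg (f := g) (μ := ν) hg
        linarith
  refine ⟨ρ.map Subtype.val, ?_, ?_, ?_, ?_⟩
  · rw [Ne, Measure.map_eq_zero_iff measurable_subtype_coe.aemeasurable]
    rintro rfl
    rw [measureReal_zero_apply] at hρ
    exact hδ.ne hρ
  · rw [Measure.map_apply measurable_subtype_coe hK.measurableSet.compl]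
    simp
  · rwa [Measure.fst, Measure.map_map measurable_fst measurable_subtype_coe]
  · rwa [Measure.snd, Measure.map_map measurable_snd measurable_subtype_coe]

theorem exists_isPartialCoupling_of_coverCost_ne_zero (hB : AnalyticSet B)
    (h : coverCost μ ν B ≠ 0) : ∃ ω, ω ≠ 0 ∧ IsPartialCoupling B μ ν ω := by
  obtain ⟨δ, hδ, hδB⟩ := exists_between (pos_iff_ne_zero.2 h)
  obtain ⟨K, hKB, hK, hδK⟩ := isCapacity_coverCost.exists_isCompact_le hB hδB
  obtain ⟨ω, hω, hωK⟩ := exists_isPartialCoupling_of_isCompact hK (hδ.trans_le hδK).ne'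
  exact ⟨ω, hω, hωK.mono hKB⟩

theorem exists_isPartialCoupling_coverCost_sub_eq_zero (hB : AnalyticSet B) (μ : Measure X)
    [IsFiniteMeasure μ] (ν : Measure Y) [IsFiniteMeasure ν] :
    ∃ ω, IsPartialCoupling B μ ν ω ∧ coverCost (μ - ω.fst) (ν - ω.snd) B = 0 := by
  obtain ⟨ω, hω, hmax⟩ := IsPartialCoupling.exists_maximal B μ ν
  have : IsFiniteMeasure ω.fst := isFiniteMeasure_of_le μ hω.fst_le
  have : IsFiniteMeasure ω.snd := isFiniteMeasure_of_le ν hω.snd_le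
  refine ⟨ω, hω, by_contra fun hcost ↦ ?_⟩
  obtain ⟨ρ, hρ, hρB⟩ := exists_isPartialCoupling_of_coverCost_ne_zero hB hcost
  have hadd := IsPartialCoupling.add ⟨hω.apply_compl, le_rfl, le_rfl⟩ hρB
  rw [add_comm ω.fst, add_comm ω.snd, Measure.sub_add_cancel_of_le hω.fst_le,
    Measure.sub_add_cancel_of_le hω.snd_le] at hadd
  exact hρ (hmax ρ hadd)

end Existence

end PartialCoupling

section InvariantSeparation

theorem analyticSet_relImage {X Y : Type*} [TopologicalSpace X] [PolishSpace X]
    [TopologicalSpace Y] [PolishSpace Y] {R : SetRel X Y} {P : Set X} (hR : AnalyticSet R)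
    (hP : AnalyticSet P) : AnalyticSet (R.image P) := by
  have himage : R.image P = Prod.snd '' (R ∩ Prod.fst ⁻¹' P) := by
    ext y
    exact ⟨fun ⟨x, hx, hxy⟩ ↦ ⟨(x, y), ⟨hxy, hx⟩, rfl⟩, fun ⟨p, ⟨hp, hx⟩, h⟩ ↦ h ▸ ⟨p.1, hx, hp⟩⟩
  rw [himage, inter_eq_iInter]
  refine (AnalyticSet.iInter fun b ↦ ?_).image_of_continuous continuous_snd
  cases b
  exacts [hP.preimage continuous_fst, hR]

variable {X : Type*} [TopologicalSpace X] [PolishSpace X] [MeasurableSpace X]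
  [BorelSpace X] {r : X → X → Prop} {P Q : Set X}

theorem exists_rClosed_separation (hrefl : ∀ x, r x x) (htrans : ∀ {x y z}, r x y → r y z → r x z)
    (hr : AnalyticSet {p : X × X | r p.1 p.2}) (hP : AnalyticSet P) (hQ : AnalyticSet Q)
    (hPQ : ∀ x ∈ P, ∀ y ∈ Q, ¬r x y) :
    ∃ B, MeasurableSet B ∧ RClosed r B ∧ P ⊆ B ∧ Disjoint B Q := by
  let R : SetRel X X := {p | r p.1 p.2}
  have hpre : AnalyticSet (R.preimage Q) :=
    analyticSet_relImage (hr.preimage continuous_swap) hQ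
  have hQ_sub : Q ⊆ R.preimage Q := fun y hy ↦ ⟨y, hy, hrefl y⟩
  have himage {S : Set X} (hS : Disjoint S (R.preimage Q)) :
      Disjoint (R.image S) (R.preimage Q) := by
    rw [disjoint_left] at hS ⊢
    rintro y ⟨x, hx, hxy⟩ ⟨z, hz, hyz⟩
    exact hS hx ⟨z, hz, htrans hxy hyz⟩
  have hstep (S : Set X) (hS : AnalyticSet S ∧ Disjoint S (R.preimage Q)) :
      ∃ T, R.image S ⊆ T ∧ Disjoint (R.preimage Q) T ∧ MeasurableSet T :=
    (analyticSet_relImage hr hS.1).measurablySeparable hpre (himage hS.2)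
  choose! F hF_image hF_disj hF_meas using hstep
  have hF (n : ℕ) : AnalyticSet (F^[n] P) ∧ Disjoint (F^[n] P) (R.preimage Q) := by
    induction n with
    | zero => exact ⟨hP, disjoint_left.2 fun x hx h ↦ h.elim fun y hy ↦ hPQ x hx y hy.1 hy.2⟩
    | succ n ih =>
      rw [Function.iterate_succ_apply']
      exact ⟨(hF_meas _ ih).analyticSet, (hF_disj _ ih).symm⟩
  have hsucc (n : ℕ) : R.image (F^[n] P) ⊆ F^[n + 1] P :=
    Function.iterate_succ_apply' F n P ▸ hF_image _ (hF n)
  refine ⟨⋃ n, F^[n + 1] P, .iUnion fun n ↦ ?_, fun x hx y hxy ↦ ?_, fun x hx ↦ ?_, ?_⟩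
  · exact Function.iterate_succ_apply' F n P ▸ hF_meas _ (hF n)
  · obtain ⟨n, hn⟩ := mem_iUnion.1 hx
    exact mem_iUnion.2 ⟨n + 1, hsucc (n + 1) ⟨x, hn, hxy⟩⟩
  · exact mem_iUnion.2 ⟨0, hsucc 0 ⟨x, hx, hrefl x⟩⟩
  · exact disjoint_iUnion_left.2 fun n ↦ (hF (n + 1)).2.mono_right hQ_sub

end InvariantSeparation

section Coupling

variable {X : Type*} [MeasurableSpace X] {r : X → X → Prop}

theorem gammaRel_fst_snd (hr : ∀ {x y}, r x y → r y x) {ω : Measure (X × X)}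
    (hω : ω {p | r p.1 p.2}ᶜ = 0) : GammaRel r ω.fst ω.snd := by
  intro A hA hrA
  have hmem : ∀ᵐ p ∂ω, r p.1 p.2 := hω
  rw [Measure.fst_apply hA, Measure.snd_apply hA]
  refine measure_congr ?_
  filter_upwards [hmem] with p hp
  exact propext ⟨fun h ↦ hrA h hp, fun h ↦ hrA h (hr hp)⟩

theorem GammaRel.sub {μ ν μ' ν' : Measure X} [IsFiniteMeasure μ'] [IsFiniteMeasure ν']
    (h : GammaRel r μ ν) (h' : GammaRel r μ' ν') (hμ : μ' ≤ μ) (hν : ν' ≤ ν) :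
    GammaRel r (μ - μ') (ν - ν') := fun A hA hrA ↦ by
  rw [Measure.sub_apply hA hμ, Measure.sub_apply hA hν, h A hA hrA, h' A hA hrA]

variable [TopologicalSpace X] [PolishSpace X] [BorelSpace X]

theorem GammaRel.eq_zero_of_coverCost_eq_zero {μ ν : Measure X} (h : GammaRel r μ ν)
    (hr : Equivalence r) (hrA : AnalyticSet {p : X × X | r p.1 p.2})
    (hcost : coverCost μ ν {p | r p.1 p.2} = 0) : μ = 0 ∧ ν = 0 := by
  obtain ⟨A, C, hA, hC, hμA, hνC, hcov⟩ := exists_null_cover_of_coverCost_eq_zero hcost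
  obtain ⟨B, hB, hrB, hAB, hBC⟩ := exists_rClosed_separation hr.refl hr.trans hrA
    hA.compl.analyticSet hC.compl.analyticSet fun x hx y hy hxy ↦
      (hcov (show (x, y) ∈ {p : X × X | r p.1 p.2} from hxy)).elim hx hy
  have hμB : μ B = 0 :=
    (h B hB hrB).trans (measure_mono_null (disjoint_compl_right_iff_subset.1 hBC) hνC)
  have hμ : μ univ = 0 :=
    measure_mono_null (fun x _ ↦ or_iff_not_imp_left.2 fun hx ↦ hAB hx)
      (measure_union_null hμA hμB)
  exact ⟨Measure.measure_univ_eq_zero.1 hμ, Measure.measure_univ_eq_zero.1 <|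
    (h univ .univ fun _ _ _ _ ↦ mem_univ _).symm.trans hμ⟩

theorem GammaRel.exists_coupling {μ ν : Measure X} [IsFiniteMeasure μ] [IsFiniteMeasure ν]
    (h : GammaRel r μ ν) (hr : Equivalence r) (hrA : AnalyticSet {p : X × X | r p.1 p.2}) :
    ∃ ω : Measure (X × X), ω.fst = μ ∧ ω.snd = ν ∧ ω {p | r p.1 p.2}ᶜ = 0 := by
  obtain ⟨ω, hω, hcost⟩ := exists_isPartialCoupling_coverCost_sub_eq_zero hrA μ ν
  have : IsFiniteMeasure ω.fst := isFiniteMeasure_of_le μ hω.fst_le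
  have : IsFiniteMeasure ω.snd := isFiniteMeasure_of_le ν hω.snd_le
  obtain ⟨hμ, hν⟩ := (h.sub (gammaRel_fst_snd hr.symm hω.apply_compl) hω.fst_le
    hω.snd_le).eq_zero_of_coverCost_eq_zero hr hrA hcost
  refine ⟨ω, ?_, ?_, hω.apply_compl⟩
  · rw [← Measure.sub_add_cancel_of_le hω.fst_le, hμ, zero_add]
  · rw [← Measure.sub_add_cancel_of_le hω.snd_le, hν, zero_add]

theorem gammaRel_iff_thetaRel_general (r : X → X → Prop) (hr : Equivalence r)
    (hrA : AnalyticSet {p : X × X | r p.1 p.2}) (μ ν : Measure X) [IsProbabilityMeasure μ]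
    [IsProbabilityMeasure ν] :
    GammaRel r μ ν ↔
      ∃ ω : Measure (X × X), IsProbabilityMeasure ω ∧ ω.fst = μ ∧ ω.snd = ν ∧
        ∃ S : Set (X × X), MeasurableSet S ∧ (∀ p ∈ S, r p.1 p.2) ∧ ω S = 1 := by
  constructor
  · intro h
    obtain ⟨ω, hμ, hν, hω⟩ := h.exists_coupling hr hrA
    have hprob : IsProbabilityMeasure ω := ⟨by rw [← Measure.fst_univ, hμ, measure_univ]⟩
    refine ⟨ω, hprob, hμ, hν, (toMeasurable ω {p | r p.1 p.2}ᶜ)ᶜ,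
      (measurableSet_toMeasurable _ _).compl,
      compl_subset_comm.1 (subset_toMeasurable _ _), ?_⟩
    rw [prob_compl_eq_one_iff (measurableSet_toMeasurable _ _), measure_toMeasurable, hω]
  · rintro ⟨ω, hω, rfl, rfl, S, hS, hSr, hωS⟩
    exact gammaRel_fst_snd hr.symm (measure_mono_null (compl_subset_compl.2 hSr)
      ((prob_compl_eq_zero_iff hS).2 hωS))

end Coupling

/-- For a Borel equivalence relation on a standard Borel space, the liftings `Γ`
(agreement on `R`-closed measurable sets) and `Θ` (existence of a coupling concentrated
on `R`) of the relation to probability measures coincide. -/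
theorem gammaRel_iff_thetaRel {X : Type*} [MeasurableSpace X] [StandardBorelSpace X]
    (r : X → X → Prop) (hr : Equivalence r)
    (hBorel : MeasurableSet {p : X × X | r p.1 p.2})
    (μ ν : Measure X) [IsProbabilityMeasure μ] [IsProbabilityMeasure ν] :
    GammaRel r μ ν ↔
      ∃ ω : Measure (X × X), IsProbabilityMeasure ω ∧ ω.fst = μ ∧ ω.snd = ν ∧
        ∃ S : Set (X × X), MeasurableSet S ∧ (∀ p ∈ S, r p.1 p.2) ∧ ω S = 1 := by
  let := upgradeStandardBorel X
  exact gammaRel_iff_thetaRel_general r hr hBorel.analyticSet μ ν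
end

section
/- Let X be a Polish space and R a closed equivalence relation on X (i.e., its graph is closed in X × X). Let (μₙ) and (νₙ) be sequences of probability measures converging weakly to μ and ν respectively, such that for every n there exists a coupling πₙ of μₙ and νₙ concentrated on R. Then there exists a coupling π of μ and ν concentrated on R; in other words, the coupling-based relation lifting ΘR is closed under weak limits. -/
open MeasureTheory Filter Topology

/-- Weak convergence of a sequence of measures. -/
def WeakTendsto {α : Type*} [TopologicalSpace α] [MeasurableSpace α]
    (μ : ℕ → Measure α) (ν : Measure α) : Prop :=
  ∀ f : BoundedContinuousFunction α ℝ,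
    Tendsto (fun n => ∫ x, f x ∂(μ n)) atTop (𝓝 (∫ x, f x ∂ν))

/-!
Taking marginals is a proper map `𝓟(X × Y) → 𝓟(X) × 𝓟(Y)` for Polish `X` and `Y`: measures whose
marginals lie in compact, hence tight, sets are themselves tight, so by Prokhorov's theorem
preimages of compact sets are compact, which suffices because `𝓟(X) × 𝓟(Y)` is metrizable.
The measures concentrated on a closed set `C` form a closed set by the portmanteau theorem, and the
pairs coupled on `C` are the image of that set under a proper, hence closed, map.
-/

theorem isClosed_setOf_probabilityMeasure_eq_one {Ω : Type*} [TopologicalSpace Ω]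
    [MeasurableSpace Ω] [OpensMeasurableSpace Ω] [HasOuterApproxClosed Ω] {C : Set Ω}
    (hC : IsClosed C) :
    IsClosed {π : ProbabilityMeasure Ω | (π : Measure Ω) C = 1} := by
  refine isClosed_iff_ultrafilter.2 fun π u hu hone ↦ prob_le_one.antisymm ?_
  calc 1 = limsup (fun ρ : ProbabilityMeasure Ω ↦ (ρ : Measure Ω) C) u :=
        ((limsup_congr hone).trans (limsup_const 1)).symm
    _ ≤ (π : Measure Ω) C :=
        ProbabilityMeasure.limsup_measure_closed_le_of_tendsto (tendsto_id'.2 hu) hC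

theorem isTightMeasureSet_of_isCompact {X : Type*} [TopologicalSpace X] [PolishSpace X]
    [MeasurableSpace X] [BorelSpace X] {K : Set (ProbabilityMeasure X)} (hK : IsCompact K) :
    IsTightMeasureSet {(μ : Measure X) | μ ∈ K} := by
  let _ := TopologicalSpace.upgradeIsCompletelyMetrizable X
  exact isTightMeasureSet_of_isCompact_closure hK.closure

section Marginals

variable {X Y : Type*} [MeasurableSpace X] [MeasurableSpace Y]

/-- The pair of marginals of a probability measure on a product space. The couplings of `μ` and `ν`
are the points of the fibre over `(μ, ν)`. -/
noncomputable def marginals (π : ProbabilityMeasure (X × Y)) :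
    ProbabilityMeasure X × ProbabilityMeasure Y :=
  (π.map measurable_fst.aemeasurable, π.map measurable_snd.aemeasurable)

/-- The coupling-based lifting `ΘC` of a relation `C ⊆ X × Y` to probability measures: the pairs
`(μ, ν)` that admit a coupling concentrated on `C`. -/
def couplingLift (C : Set (X × Y)) : Set (ProbabilityMeasure X × ProbabilityMeasure Y) :=
  marginals '' {π | (π : Measure (X × Y)) C = 1}

theorem mem_couplingLift_iff {C : Set (X × Y)} {μ : ProbabilityMeasure X}
    {ν : ProbabilityMeasure Y} :
    (μ, ν) ∈ couplingLift C ↔ ∃ π : Measure (X × Y), IsProbabilityMeasure π ∧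
      π.fst = μ ∧ π.snd = ν ∧ π C = 1 := by
  constructor
  · rintro ⟨π, hC, hπ⟩
    obtain ⟨rfl, rfl⟩ := Prod.mk.inj hπ
    exact ⟨π, inferInstance, rfl, rfl, hC⟩
  · rintro ⟨π, hπ, hfst, hsnd, hC⟩
    exact ⟨⟨π, hπ⟩, hC, Prod.ext (Subtype.ext hfst) (Subtype.ext hsnd)⟩

variable [TopologicalSpace X] [TopologicalSpace Y]

theorem continuous_marginals [BorelSpace X] [BorelSpace Y] [OpensMeasurableSpace (X × Y)] :
    Continuous (marginals : ProbabilityMeasure (X × Y) → _) :=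
  (ProbabilityMeasure.continuous_map continuous_fst).prodMk
    (ProbabilityMeasure.continuous_map continuous_snd)

variable [PolishSpace X] [PolishSpace Y] [BorelSpace X] [BorelSpace Y]

theorem isTightMeasureSet_marginals_preimage {K : Set (ProbabilityMeasure X × ProbabilityMeasure Y)}
    (hK : IsCompact K) :
    IsTightMeasureSet {(π : Measure (X × Y)) | π ∈ marginals ⁻¹' K} := by
  apply IsTightMeasureSet.prodMk
  · refine (isTightMeasureSet_of_isCompact (hK.image continuous_fst)).subset ?_
    rintro _ ⟨_, ⟨π, hπ, rfl⟩, rfl⟩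
    exact ⟨(marginals π).1, Set.mem_image_of_mem _ hπ, rfl⟩
  · refine (isTightMeasureSet_of_isCompact (hK.image continuous_snd)).subset ?_
    rintro _ ⟨_, ⟨π, hπ, rfl⟩, rfl⟩
    exact ⟨(marginals π).2, Set.mem_image_of_mem _ hπ, rfl⟩

theorem isProperMap_marginals : IsProperMap (marginals : ProbabilityMeasure (X × Y) → _) := by
  refine isProperMap_iff_isCompact_preimage.2 ⟨continuous_marginals, fun K hK ↦ ?_⟩
  have hclosed : IsClosed (marginals ⁻¹' K) := hK.isClosed.preimage continuous_marginals
  rw [← hclosed.closure_eq]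
  exact isCompact_closure_of_isTightMeasureSet (isTightMeasureSet_marginals_preimage hK)

theorem isClosed_couplingLift {C : Set (X × Y)} (hC : IsClosed C) : IsClosed (couplingLift C) :=
  isProperMap_marginals.isClosedMap _ (isClosed_setOf_probabilityMeasure_eq_one hC)

theorem thetaRel_closed_under_weak_limits_general {C : Set (X × Y)} (hC : IsClosed C)
    {ι : Type*} {l : Filter ι}
    {μ : ι → Measure X} {ν : ι → Measure Y} {μl : Measure X} {νl : Measure Y}
    [∀ i, IsProbabilityMeasure (μ i)] [∀ i, IsProbabilityMeasure (ν i)]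
    [IsProbabilityMeasure μl] [IsProbabilityMeasure νl]
    (hμ : ∀ f : BoundedContinuousFunction X ℝ,
      Tendsto (fun i ↦ ∫ x, f x ∂(μ i)) l (𝓝 (∫ x, f x ∂μl)))
    (hν : ∀ f : BoundedContinuousFunction Y ℝ,
      Tendsto (fun i ↦ ∫ y, f y ∂(ν i)) l (𝓝 (∫ y, f y ∂νl)))
    (hcpl : ∃ᶠ i in l, ∃ π : Measure (X × Y), IsProbabilityMeasure π ∧
      π.fst = μ i ∧ π.snd = ν i ∧ π C = 1) :
    ∃ π : Measure (X × Y), IsProbabilityMeasure π ∧ π.fst = μl ∧ π.snd = νl ∧ π C = 1 := by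
  let M (i : ι) : ProbabilityMeasure X := ⟨μ i, inferInstance⟩
  let N (i : ι) : ProbabilityMeasure Y := ⟨ν i, inferInstance⟩
  let Ml : ProbabilityMeasure X := ⟨μl, inferInstance⟩
  let Nl : ProbabilityMeasure Y := ⟨νl, inferInstance⟩
  have hM : Tendsto M l (𝓝 Ml) := ProbabilityMeasure.tendsto_iff_forall_integral_tendsto.2 hμ
  have hN : Tendsto N l (𝓝 Nl) := ProbabilityMeasure.tendsto_iff_forall_integral_tendsto.2 hν
  have hlift : ∃ᶠ i in l, (M i, N i) ∈ couplingLift C :=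
    hcpl.mono fun i ↦ (mem_couplingLift_iff (μ := M i) (ν := N i)).2
  exact mem_couplingLift_iff.1 <|
    (isClosed_couplingLift hC).mem_of_frequently_of_tendsto hlift (hM.prodMk_nhds hN)

end Marginals

/-- For a closed equivalence relation `r` on a Polish space, the coupling-based relation
lifting `Θr` is closed under weak limits: if `μₙ → μ` and `νₙ → ν` weakly and each pair
`(μₙ, νₙ)` admits a coupling concentrated on `r`, so does `(μ, ν)`. -/
theorem thetaRel_closed_under_weak_limits {X : Type*}
    [TopologicalSpace X] [PolishSpace X] [MeasurableSpace X] [BorelSpace X]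
    (r : X → X → Prop) (hr : Equivalence r)
    (hclosed : IsClosed {p : X × X | r p.1 p.2})
    (μ ν : ℕ → Measure X) (μl νl : Measure X)
    [∀ n, IsProbabilityMeasure (μ n)] [∀ n, IsProbabilityMeasure (ν n)]
    [IsProbabilityMeasure μl] [IsProbabilityMeasure νl]
    (hμ : WeakTendsto μ μl) (hν : WeakTendsto ν νl)
    (hcpl : ∀ n, ∃ π : Measure (X × X), IsProbabilityMeasure π ∧
      π.fst = μ n ∧ π.snd = ν n ∧ π {p : X × X | r p.1 p.2} = 1) :
    ∃ π : Measure (X × X), IsProbabilityMeasure π ∧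
      π.fst = μl ∧ π.snd = νl ∧ π {p : X × X | r p.1 p.2} = 1 :=
  thetaRel_closed_under_weak_limits_general hclosed hμ hν (Frequently.of_forall hcpl)
end
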